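/- (Andrews–Askey integral) For 0<q<1 and complex a,b,c,d with max{|ac|,|ad|,|bc|,|bd|}<1 and c,d ≠ 0, ∫_c^d ((qt/c;q)_∞ (qt/d;q)_∞ / ((at;q)_∞ (bt;q)_∞)) d_q t = d(1-q)(q;q)_∞ (dq/c;q)_∞ (c/d;q)_∞ (abcd;q)_∞ / ((ac;q)_∞ (ad;q)_∞ (bc;q)_∞ (bd;q)_∞), where the q-integral from c to d is defined by ∫_c^d f(t) d_q t = d(1-q)∑_{n=0}^∞ f(dq^n) q^n − c(1-q)∑_{n=0}^∞ f(cq^n) q^n. -/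

import Mathlib

open Finset

noncomputable def qPoch (q a : ℂ) (n : ℕ) : ℂ := ∏ k ∈ Finset.range n, (1 - a * q ^ k)

noncomputable def qPochInf (q a : ℂ) : ℂ := ∏' k : ℕ, (1 - a * q ^ k)

noncomputable def cauchyP (q x y : ℂ) (n : ℕ) : ℂ := ∏ k ∈ Finset.range n, (x - q ^ k * y)

noncomputable def qBinom (q : ℂ) (n k : ℕ) : ℂ := qPoch q q n / (qPoch q q k * qPoch q q (n - k))

noncomputable def Dq (q : ℂ) (f : ℂ → ℂ) : ℂ → ℂ := fun a => (f a - f (q * a)) / a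

noncomputable def thetaq (q : ℂ) (f : ℂ → ℂ) : ℂ → ℂ := fun a => (f (a / q) - f a) / (a / q)

noncomputable def qIntegral (q : ℂ) (f : ℂ → ℂ) (c d : ℂ) : ℂ :=
  (1 - q) * ∑' n : ℕ, q ^ n * (d * f (d * q ^ n) - c * f (c * q ^ n))

open Filter Topology

lemma aa_summ (q : ℂ) (hq : ‖q‖ < 1) (x : ℂ) : Summable fun k : ℕ => ‖-(x * q ^ k)‖ := by
  simp only [norm_neg, norm_mul, norm_pow]
  exact (summable_geometric_of_lt_one (norm_nonneg _) hq).mul_left _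

lemma aa_mult (q : ℂ) (hq : ‖q‖ < 1) (x : ℂ) : Multipliable fun k : ℕ => (1 - x * q ^ k) := by
  simpa [sub_eq_add_neg] using multipliable_one_add_of_summable (aa_summ q hq x)

lemma aa_P_step (q : ℂ) (hq : ‖q‖ < 1) (x : ℂ) :
    qPochInf q x = (1 - x) * qPochInf q (q * x) := by
  unfold qPochInf
  have h : (fun k : ℕ => (1 - x * q ^ (k + 1))) = fun k : ℕ => 1 - (q * x) * q ^ k := by
    funext k; ring
  rw [tprod_eq_zero_mul' (f := fun k : ℕ => (1 - x * q ^ k)) (by rw [h]; exact aa_mult q hq _), h]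
  simp

lemma aa_P_tendsto (q : ℂ) (hq : ‖q‖ < 1) (x : ℂ) :
    Tendsto (fun n => qPoch q x n) atTop (𝓝 (qPochInf q x)) :=
  (aa_mult q hq x).hasProd.tendsto_prod_nat

lemma aa_P_ne (q : ℂ) (hq : ‖q‖ < 1) (x : ℂ) (hx : ∀ n : ℕ, x * q ^ n ≠ 1) :
    qPochInf q x ≠ 0 := by
  have := tprod_one_add_ne_zero_of_summable (f := fun k : ℕ => -(x * q ^ k))
    (fun i h => hx i (by linear_combination -h)) (aa_summ q hq x)
  simpa [qPochInf, sub_eq_add_neg] using this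

lemma aa_P_zero (q : ℂ) : qPochInf q 0 = 1 := by simp [qPochInf]

lemma aa_P_eq_zero (q : ℂ) (hq : ‖q‖ < 1) (x : ℂ) (n : ℕ) (hx : x * q ^ n = 1) :
    qPochInf q x = 0 := by
  induction n generalizing x with
  | zero => rw [aa_P_step q hq]; simp at hx; simp [hx]
  | succ n ih => rw [aa_P_step q hq, ih (q * x) (by rw [← hx]; ring), mul_zero]

lemma aa_P_bound (q : ℂ) (hq : ‖q‖ < 1) (x : ℂ) :
    ‖qPochInf q x - 1‖ ≤ Real.exp (‖x‖ * (1 - ‖q‖)⁻¹) - 1 := by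
  refine le_of_tendsto ((aa_P_tendsto q hq x).sub_const 1).norm (Eventually.of_forall fun n => ?_)
  have h := (Finset.range n).norm_prod_one_add_sub_one_le (fun k : ℕ => -(x * q ^ k))
  have h2 : ∑ k ∈ Finset.range n, ‖-(x * q ^ k)‖ ≤ ‖x‖ * (1 - ‖q‖)⁻¹ := by
    rw [← tsum_geometric_of_lt_one (norm_nonneg _) hq, ← tsum_mul_left]
    simp only [norm_neg, norm_mul, norm_pow]
    exact ((summable_geometric_of_lt_one (norm_nonneg _) hq).mul_left _).sum_le_tsum _
      (fun i _ => by positivity)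
  have h3 := Real.exp_le_exp.2 h2
  simp only [← sub_eq_add_neg] at h
  unfold qPoch
  linarith

lemma aa_P_lim (q : ℂ) (hq : ‖q‖ < 1) (x : ℂ) :
    Tendsto (fun n : ℕ => qPochInf q (x * q ^ n)) atTop (𝓝 1) := by
  rw [tendsto_iff_norm_sub_tendsto_zero]
  refine squeeze_zero (fun _ => norm_nonneg _) (fun n => aa_P_bound q hq _) ?_
  have h1 : Tendsto (fun n : ℕ => x * q ^ n) atTop (𝓝 0) := by
    simpa using (tendsto_pow_atTop_nhds_zero_of_norm_lt_one hq).const_mul x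
  have h2 := (Real.continuous_exp.tendsto _).comp (h1.norm.mul_const (1 - ‖q‖)⁻¹)
  simpa using h2.sub_const 1

lemma aa_bdd {u : ℕ → ℂ} {l : ℂ} (h : Tendsto u atTop (𝓝 l)) : ∃ C, 0 ≤ C ∧ ∀ n, ‖u n‖ ≤ C := by
  obtain ⟨C, hC⟩ := (Metric.isBounded_range_of_tendsto u h).exists_norm_le
  exact ⟨C, (norm_nonneg _).trans (hC (u 0) ⟨0, rfl⟩), fun n => hC _ ⟨n, rfl⟩⟩

noncomputable def aaW (q a b c d t : ℂ) : ℂ :=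
  qPochInf q (q * t / c) * qPochInf q (q * t / d) / (qPochInf q (a * t) * qPochInf q (b * t))

noncomputable def aaS (q a b c d : ℂ) : ℂ :=
  ∑' n : ℕ, q ^ n * (d * aaW q a b c d (d * q ^ n) - c * aaW q a b c d (c * q ^ n))

lemma aaW_comm (q a b c d t : ℂ) : aaW q a b c d t = aaW q b a c d t := by
  unfold aaW; rw [mul_comm (qPochInf q (a * t))]

lemma aaS_comm (q a b c d : ℂ) : aaS q a b c d = aaS q b a c d := by
  unfold aaS; simp only [aaW_comm q a b]

lemma aaW_bdd (q : ℂ) (hq : ‖q‖ < 1) (a b c d e : ℂ) :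
    ∃ C, 0 ≤ C ∧ ∀ N n : ℕ, ‖aaW q (a * q ^ N) b c d (e * q ^ n)‖ ≤ C := by
  obtain ⟨C1, h1, H1⟩ := aa_bdd (aa_P_lim q hq (q * e / c))
  obtain ⟨C2, h2, H2⟩ := aa_bdd (aa_P_lim q hq (q * e / d))
  obtain ⟨C3, h3, H3⟩ := aa_bdd ((aa_P_lim q hq (a * e)).inv₀ one_ne_zero)
  obtain ⟨C4, h4, H4⟩ := aa_bdd ((aa_P_lim q hq (b * e)).inv₀ one_ne_zero)
  refine ⟨C1 * C2 * (C3 * C4), by positivity, fun N n => ?_⟩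
  have e1 : q * (e * q ^ n) / c = q * e / c * q ^ n := by ring
  have e2 : q * (e * q ^ n) / d = q * e / d * q ^ n := by ring
  have e3 : a * q ^ N * (e * q ^ n) = a * e * q ^ (N + n) := by ring
  have e4 : b * (e * q ^ n) = b * e * q ^ n := by ring
  rw [aaW, e1, e2, e3, e4, div_eq_mul_inv, mul_inv, norm_mul, norm_mul, norm_mul]
  have := H1 n; have := H2 n; have := H3 (N + n); have := H4 n
  gcongr

lemma aaW_lim (q : ℂ) (hq : ‖q‖ < 1) (a b c d t : ℂ) :
    Tendsto (fun N : ℕ => aaW q (a * q ^ N) b c d t) atTop (𝓝 (aaW q 0 b c d t)) := by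
  have h := aa_P_lim q hq (a * t)
  have h2 := (h.mul_const (qPochInf q (b * t))).inv₀
  by_cases hb : qPochInf q (b * t) = 0
  · simp [aaW, hb]
  · have h3 := (h2 (by simpa using hb)).const_mul (qPochInf q (q * t / c) * qPochInf q (q * t / d))
    simp only [aaW, div_eq_mul_inv, zero_mul, aa_P_zero]
    refine h3.congr fun N => ?_
    rw [show a * q ^ N * t = a * t * q ^ N by ring]
    simp [div_eq_mul_inv]

lemma aa_term_bound (q x y c d : ℂ) (n : ℕ) {C D : ℝ} (hx : ‖x‖ ≤ C) (hy : ‖y‖ ≤ D) :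
    ‖q ^ n * (d * x - c * y)‖ ≤ ‖q‖ ^ n * (‖d‖ * C + ‖c‖ * D) := by
  rw [norm_mul, norm_pow]
  gcongr
  refine (norm_sub_le _ _).trans ?_
  rw [norm_mul, norm_mul]
  gcongr

lemma aaS_lim (q : ℂ) (hq : ‖q‖ < 1) (a b c d : ℂ) :
    Tendsto (fun N : ℕ => aaS q (a * q ^ N) b c d) atTop (𝓝 (aaS q 0 b c d)) := by
  obtain ⟨C, h1, H1⟩ := aaW_bdd q hq a b c d d
  obtain ⟨D, h2, H2⟩ := aaW_bdd q hq a b c d c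
  unfold aaS
  refine tendsto_tsum_of_dominated_convergence (bound := fun n => ‖q‖ ^ n * (‖d‖ * C + ‖c‖ * D))
    ((summable_geometric_of_lt_one (norm_nonneg _) hq).mul_right _) (fun k => ?_)
    (Eventually.of_forall fun N n => aa_term_bound _ _ _ _ _ _ (H1 N n) (H2 N n))
  exact (((aaW_lim q hq a b c d _).const_mul d).sub
    ((aaW_lim q hq a b c d _).const_mul c)).const_mul (q ^ k)

lemma aa_summable (q : ℂ) (hq : ‖q‖ < 1) (c d : ℂ) (h : ℂ → ℂ) (C D : ℝ)
    (H1 : ∀ n : ℕ, ‖h (d * q ^ n)‖ ≤ C) (H2 : ∀ n : ℕ, ‖h (c * q ^ n)‖ ≤ D) :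
    Summable fun n : ℕ => q ^ n * (d * h (d * q ^ n) - c * h (c * q ^ n)) :=
  Summable.of_norm_bounded ((summable_geometric_of_lt_one (norm_nonneg _) hq).mul_right _)
    (fun n => aa_term_bound _ _ _ _ _ _ (H1 n) (H2 n))

lemma aaW_summable (q : ℂ) (hq : ‖q‖ < 1) (a b c d : ℂ) :
    Summable fun n : ℕ => q ^ n * (d * aaW q a b c d (d * q ^ n) - c * aaW q a b c d (c * q ^ n)) := by
  obtain ⟨C, h1, H1⟩ := aaW_bdd q hq a b c d d
  obtain ⟨D, h2, H2⟩ := aaW_bdd q hq a b c d c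
  exact aa_summable q hq c d _ C D (fun n => by simpa using H1 0 n) (fun n => by simpa using H2 0 n)

noncomputable def aaG (q a b c d t : ℂ) : ℂ :=
  qPochInf q (t / c) * qPochInf q (t / d) / (qPochInf q (a * t) * qPochInf q (b * t))

lemma aaG_lim (q : ℂ) (hq : ‖q‖ < 1) (a b c d e : ℂ) :
    Tendsto (fun n : ℕ => aaG q a b c d (e * q ^ n)) atTop (𝓝 1) := by
  have h := ((aa_P_lim q hq (e / c)).mul (aa_P_lim q hq (e / d))).div
    ((aa_P_lim q hq (a * e)).mul (aa_P_lim q hq (b * e))) (by simp)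
  simp only [mul_one, div_one] at h
  refine h.congr fun n => ?_
  simp only [aaG, Pi.div_apply]
  rw [show e * q ^ n / c = e / c * q ^ n by ring, show e * q ^ n / d = e / d * q ^ n by ring,
    mul_assoc a, mul_assoc b]

lemma aaW_q (q : ℂ) (hq : ‖q‖ < 1) (a b c d t : ℂ) (ha : qPochInf q (a * t) ≠ 0) :
    aaW q (a * q) b c d t = (1 - a * t) * aaW q a b c d t := by
  have h := aa_P_step q hq (a * t)
  unfold aaW
  rw [show a * q * t = q * (a * t) by ring]
  rw [h] at ha ⊢
  have h1 : 1 - a * t ≠ 0 := left_ne_zero_of_mul ha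
  have h2 := right_ne_zero_of_mul ha
  by_cases hb : qPochInf q (b * t) = 0
  · simp [hb]
  · generalize 1 - a * t = u at *
    field_simp

lemma aaG_diff (q : ℂ) (hq : ‖q‖ < 1) (a b c d t : ℂ) (hc : c ≠ 0) (hd : d ≠ 0)
    (ha : qPochInf q (a * t) ≠ 0) (hb : qPochInf q (b * t) ≠ 0) :
    c * d * (aaG q a b c d t - aaG q a b c d (q * t)) =
      t * (aaW q a b c d t * ((a + b) * c * d - c - d + t * (1 - a * b * c * d))) := by
  have h1 := aa_P_step q hq (a * t)
  have h2 := aa_P_step q hq (b * t)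
  have h3 := aa_P_step q hq (t / c)
  have h4 := aa_P_step q hq (t / d)
  unfold aaG aaW
  rw [show a * (q * t) = q * (a * t) by ring, show b * (q * t) = q * (b * t) by ring,
    h3, h4, ← mul_div_assoc, ← mul_div_assoc]
  rw [h1] at ha ⊢
  rw [h2] at hb ⊢
  have := left_ne_zero_of_mul ha
  have := right_ne_zero_of_mul ha
  have := left_ne_zero_of_mul hb
  have := right_ne_zero_of_mul hb
  generalize qPochInf q (q * (a * t)) = A at *
  generalize qPochInf q (q * (b * t)) = B at *
  generalize qPochInf q (q * t / c) = X at *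
  generalize qPochInf q (q * t / d) = Y at *
  have hu : a * t = 1 - (1 - a * t) := by ring
  have hv : b * t = 1 - (1 - b * t) := by ring
  generalize 1 - a * t = u at *
  generalize 1 - b * t = v at *
  field_simp
  linear_combination X * Y * ((-c * d + c * d * b * t) * hu + (-c * d * u) * hv)

lemma aa_P_one (q : ℂ) (hq : ‖q‖ < 1) : qPochInf q 1 = 0 := by
  rw [aa_P_step q hq]; simp

def aaGood (q x : ℂ) : Prop := ∀ n : ℕ, x * q ^ n ≠ 1

lemma aaGood_P (q : ℂ) (hq : ‖q‖ < 1) (x y : ℂ) (h : aaGood q (x * y)) (n : ℕ) :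
    qPochInf q (x * (y * q ^ n)) ≠ 0 := by
  refine aa_P_ne q hq _ fun m => ?_
  have := h (n + m)
  intro h'
  exact this (by rw [← h']; ring)

lemma aa_key (q : ℂ) (hq : ‖q‖ < 1) (a b c d : ℂ) (hc : c ≠ 0) (hd : d ≠ 0)
    (hac : aaGood q (a * c)) (had : aaGood q (a * d))
    (hbc : aaGood q (b * c)) (hbd : aaGood q (b * d)) :
    HasSum (fun n : ℕ => q ^ n * (
      d * (aaW q a b c d (d * q ^ n) * ((a + b) * c * d - c - d + (d * q ^ n) * (1 - a * b * c * d)))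
      - c * (aaW q a b c d (c * q ^ n) *
        ((a + b) * c * d - c - d + (c * q ^ n) * (1 - a * b * c * d))))) 0 := by
  have hS : Summable (fun n : ℕ => q ^ n * (
      d * (aaW q a b c d (d * q ^ n) * ((a + b) * c * d - c - d + (d * q ^ n) * (1 - a * b * c * d)))
      - c * (aaW q a b c d (c * q ^ n) *
        ((a + b) * c * d - c - d + (c * q ^ n) * (1 - a * b * c * d))))) := by
    have hl : ∀ e, ∃ C, ∀ n : ℕ, ‖aaW q a b c d (e * q ^ n) *
        ((a + b) * c * d - c - d + (e * q ^ n) * (1 - a * b * c * d))‖ ≤ C := by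
      intro e
      obtain ⟨C, h1, H1⟩ := aaW_bdd q hq a b c d e
      obtain ⟨D, h2, H2⟩ := aa_bdd ((((tendsto_pow_atTop_nhds_zero_of_norm_lt_one hq).const_mul
        e).mul_const (1 - a * b * c * d)).const_add ((a + b) * c * d - c - d))
      refine ⟨C * D, fun n => ?_⟩
      rw [norm_mul]
      have := H1 0 n
      simp only [pow_zero, mul_one] at this
      have := H2 n
      gcongr
    obtain ⟨C, hC⟩ := hl d
    obtain ⟨D, hD⟩ := hl c
    exact aa_summable q hq c d (fun t => aaW q a b c d t *
      ((a + b) * c * d - c - d + t * (1 - a * b * c * d))) C D hC hD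
  refine (hS.hasSum_iff_tendsto_nat).2 ?_
  have hG : ∀ e, Tendsto (fun N : ℕ => aaG q a b c d e - aaG q a b c d (e * q ^ N)) atTop
      (𝓝 (aaG q a b c d e - 1)) := fun e => (aaG_lim q hq a b c d e).const_sub _
  have hGd : aaG q a b c d d = 0 := by simp [aaG, div_self hd, aa_P_one q hq]
  have hGc : aaG q a b c d c = 0 := by simp [aaG, div_self hc, aa_P_one q hq]
  have h := ((hG d).sub (hG c)).const_mul (c * d)
  rw [hGd, hGc] at h
  simp only [sub_self, mul_zero] at h
  refine h.congr fun N => ?_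
  induction N with
  | zero => simp [hGd, hGc]
  | succ N ih =>
    rw [Finset.sum_range_succ, ← ih]
    have e1 := aaG_diff q hq a b c d (d * q ^ N) hc hd (aaGood_P q hq _ _ had N)
      (aaGood_P q hq _ _ hbd N)
    have e2 := aaG_diff q hq a b c d (c * q ^ N) hc hd (aaGood_P q hq _ _ hac N)
      (aaGood_P q hq _ _ hbc N)
    rw [show q * (d * q ^ N) = d * q ^ (N + 1) by ring] at e1
    rw [show q * (c * q ^ N) = c * q ^ (N + 1) by ring] at e2
    linear_combination e1 - e2

lemma aa_func (q : ℂ) (hq : ‖q‖ < 1) (a b c d : ℂ) (hc : c ≠ 0) (hd : d ≠ 0)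
    (hac : aaGood q (a * c)) (had : aaGood q (a * d))
    (hbc : aaGood q (b * c)) (hbd : aaGood q (b * d)) :
    aaS q (a * q) b c d * (1 - a * b * c * d) = aaS q a b c d * ((1 - a * c) * (1 - a * d)) := by
  have hk := aa_key q hq a b c d hc hd hac had hbc hbd
  have h1 := (aaW_summable q hq a b c d).hasSum
  have h2 := (aaW_summable q hq (a * q) b c d).hasSum
  have h := ((h1.mul_right ((1 - a * c) * (1 - a * d))).sub (h2.mul_right (1 - a * b * c * d))).sub
    (hk.mul_left a)
  have h0 := h.unique (f := _) (a₂ := 0) (by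
    convert hasSum_zero using 2 with n
    rw [aaW_q q hq a b c d _ (aaGood_P q hq _ _ had n),
      aaW_q q hq a b c d _ (aaGood_P q hq _ _ hac n)]
    ring)
  unfold aaS
  linear_combination -h0

lemma aaGood_mul (q x : ℂ) (h : aaGood q x) (N : ℕ) : aaGood q (x * q ^ N) := by
  intro n h'
  exact h (N + n) (by rw [← h']; ring)

lemma aa_iter (q : ℂ) (hq : ‖q‖ < 1) (a b c d : ℂ) (hc : c ≠ 0) (hd : d ≠ 0)
    (hac : aaGood q (a * c)) (had : aaGood q (a * d))
    (hbc : aaGood q (b * c)) (hbd : aaGood q (b * d)) :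
    aaS q 0 b c d * qPochInf q (a * b * c * d) =
      aaS q a b c d * (qPochInf q (a * c) * qPochInf q (a * d)) := by
  have hN : ∀ N : ℕ, aaS q (a * q ^ N) b c d * qPoch q (a * b * c * d) N =
      aaS q a b c d * (qPoch q (a * c) N * qPoch q (a * d) N) := by
    intro N
    induction N with
    | zero => simp [qPoch]
    | succ N ih =>
      have h := aa_func q hq (a * q ^ N) b c d hc hd
        (by rw [mul_right_comm]; exact aaGood_mul q _ hac N)
        (by rw [mul_right_comm]; exact aaGood_mul q _ had N) hbc hbd
      simp only [qPoch, Finset.prod_range_succ] at ih ⊢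
      rw [show a * q ^ (N + 1) = a * q ^ N * q by ring]
      linear_combination (∏ k ∈ Finset.range N, (1 - a * b * c * d * q ^ k)) * h +
        (1 - a * q ^ N * c) * (1 - a * q ^ N * d) * ih
  refine tendsto_nhds_unique ((aaS_lim q hq a b c d).mul (aa_P_tendsto q hq _)) ?_
  simp only [hN]
  exact ((aa_P_tendsto q hq _).mul (aa_P_tendsto q hq _)).const_mul _

lemma aaGood_zero (q x : ℂ) : aaGood q (0 * x) := by intro n; simp

lemma aa_full (q : ℂ) (hq : ‖q‖ < 1) (a b c d : ℂ) (hc : c ≠ 0) (hd : d ≠ 0)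
    (hac : aaGood q (a * c)) (had : aaGood q (a * d))
    (hbc : aaGood q (b * c)) (hbd : aaGood q (b * d)) :
    aaS q 0 0 c d * qPochInf q (a * b * c * d) =
      aaS q a b c d * (qPochInf q (a * c) * qPochInf q (a * d) *
        (qPochInf q (b * c) * qPochInf q (b * d))) := by
  have h1 := aa_iter q hq a b c d hc hd hac had hbc hbd
  have h2 := aa_iter q hq b 0 c d hc hd hbc hbd (aaGood_zero q c) (aaGood_zero q d)
  rw [aaS_comm q b 0] at h2
  simp only [mul_zero, zero_mul, aa_P_zero, mul_one] at h2
  rw [h2]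
  linear_combination qPochInf q (b * c) * qPochInf q (b * d) * h1

lemma aaS_swap (q a b c d : ℂ) : aaS q a b c d = - aaS q a b d c := by
  unfold aaS
  rw [← tsum_neg]
  congr 1; funext n
  simp only [aaW, mul_comm (qPochInf q (q * _ / c))]
  ring

lemma aa_degen (q : ℂ) (hq : ‖q‖ < 1) (hq0 : q ≠ 0) (c : ℂ) (hc : c ≠ 0) (m : ℕ) :
    aaS q 0 0 c (c * q ^ m) = 0 := by
  set d := c * q ^ m with hd
  set w := aaW q 0 0 c d with hw
  obtain ⟨D, h2, H2⟩ := aaW_bdd q hq 0 0 c d c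
  have hs : Summable (fun n : ℕ => q ^ n * (c * w (c * q ^ n))) := by
    have := aa_summable q hq (-c) 0 (fun t => w (-t)) ‖w 0‖ D (fun n => by simp)
      (fun n => by simpa using H2 0 n)
    simpa using this
  have hz : ∀ n < m, w (c * q ^ n) = 0 := by
    intro n hn
    have : qPochInf q (q * (c * q ^ n) / d) = 0 := by
      apply aa_P_eq_zero q hq _ (m - (n + 1))
      have : q ^ m = q ^ (n + 1) * q ^ (m - (n + 1)) := by rw [← pow_add]; congr 1; omega
      rw [hd, this, pow_succ]
      field_simp
    simp [hw, aaW, this]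
  have hsh := hs.sum_add_tsum_nat_add m
  rw [Finset.sum_eq_zero (fun n hn => by rw [hz n (Finset.mem_range.1 hn)]; simp), zero_add] at hsh
  have hs' := (summable_nat_add_iff m).2 hs
  have : aaS q 0 0 c d = ∑' n : ℕ, (q ^ (n + m) * (c * w (c * q ^ (n + m))) -
      q ^ n * (c * w (c * q ^ n))) := by
    unfold aaS
    congr 1; funext n
    rw [show d * q ^ n = c * q ^ (n + m) by rw [hd]; ring, hd]
    ring
  rw [this, hs'.tsum_sub hs, hsh, sub_self]

lemma aaGood_q (q : ℂ) (hq : ‖q‖ < 1) : aaGood q q := by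
  intro n h
  have := congrArg norm h
  rw [← pow_succ', norm_pow, norm_one] at this
  exact absurd this (pow_lt_one₀ (norm_nonneg _) hq (by simp)).ne

lemma aa_zero (q : ℂ) (hq : ‖q‖ < 1) (hq0 : q ≠ 0) (c d : ℂ) (hc : c ≠ 0) (hd : d ≠ 0) :
    aaS q 0 0 c d = d * (qPochInf q q * qPochInf q (d * q / c) * qPochInf q (c / d)) := by
  by_cases h1 : ∃ m : ℕ, d = c * q ^ m
  · obtain ⟨m, rfl⟩ := h1
    rw [aa_degen q hq hq0 c hc m, aa_P_eq_zero q hq (c / (c * q ^ m)) m (by field_simp)]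
    ring
  by_cases h2 : ∃ m : ℕ, c = d * q ^ m
  · obtain ⟨m, rfl⟩ := h2
    rw [aaS_swap, aa_degen q hq hq0 d hd m]
    rcases m with _ | m
    · rw [aa_P_eq_zero q hq (d * q ^ 0 / d) 0 (by simp [hd])]
      ring
    · rw [aa_P_eq_zero q hq (d * q / (d * q ^ (m + 1))) m (by rw [pow_succ]; field_simp)]
      ring
  push Not at h1 h2
  have g1 : aaGood q (q / c * d) := by
    intro n h
    apply h2 (n + 1)
    field_simp at h
    rw [← h]; ring
  have g2 : aaGood q (q / d * c) := by
    intro n h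
    apply h1 (n + 1)
    field_simp at h
    rw [← h]; ring
  have e1 : q / c * c = q := by field_simp
  have e2 : q / d * d = q := by field_simp
  have h := aa_full q hq (q / c) (q / d) c d hc hd (by rw [e1]; exact aaGood_q q hq) g1 g2
    (by rw [e2]; exact aaGood_q q hq)
  have hq1 : 1 - q ≠ 0 := by
    intro h; have := aaGood_q q hq 0; apply this; simp; linear_combination -h
  have hW : ∀ n : ℕ, q ^ n * (d * aaW q (q / c) (q / d) c d (d * q ^ n) -
      c * aaW q (q / c) (q / d) c d (c * q ^ n)) = q ^ n * (d - c) := by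
    intro n
    have k1 := aaGood_P q hq _ _ g1 n
    have k2 := aaGood_P q hq _ _ g2 n
    have k3 := aaGood_P q hq (q / c) c (by rw [e1]; exact aaGood_q q hq) n
    have k4 := aaGood_P q hq (q / d) d (by rw [e2]; exact aaGood_q q hq) n
    simp only [aaW]
    simp only [mul_div_right_comm q]
    rw [div_self (mul_ne_zero k1 k4), div_self (mul_ne_zero k3 k2)]
    ring
  have hSv : aaS q (q / c) (q / d) c d = (1 - q)⁻¹ * (d - c) := by
    unfold aaS
    simp only [hW]
    rw [tsum_mul_right, tsum_geometric_of_norm_lt_one hq]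
  rw [hSv, e1, e2, show q / c * (q / d) * c * d = q * q by field_simp] at h
  have hP : qPochInf q q ≠ 0 := aa_P_ne q hq q (aaGood_q q hq)
  have s1 := aa_P_step q hq q
  have s2 := aa_P_step q hq (c / d)
  rw [show q * (c / d) = q / d * c by ring] at s2
  have hP2 : qPochInf q (q * q) ≠ 0 := by rw [s1] at hP; exact right_ne_zero_of_mul hP
  apply mul_right_cancel₀ hP2
  rw [h, s2, show d * q / c = q / c * d by ring, s1]
  field_simp

theorem andrews_askey_integral (q : ℝ) (hq0 : 0 < q) (hq1 : q < 1) (a b c d : ℂ)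
    (hc : c ≠ 0) (hd : d ≠ 0)
    (hac : ‖a * c‖ < 1) (had : ‖a * d‖ < 1) (hbc : ‖b * c‖ < 1) (hbd : ‖b * d‖ < 1) :
    qIntegral (q : ℂ)
        (fun t => qPochInf (q : ℂ) ((q : ℂ) * t / c) * qPochInf (q : ℂ) ((q : ℂ) * t / d) /
          (qPochInf (q : ℂ) (a * t) * qPochInf (q : ℂ) (b * t))) c d
      = d * (1 - (q : ℂ)) *
          (qPochInf (q : ℂ) (q : ℂ) * qPochInf (q : ℂ) (d * (q : ℂ) / c) *
            qPochInf (q : ℂ) (c / d) * qPochInf (q : ℂ) (a * b * c * d)) /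
          (qPochInf (q : ℂ) (a * c) * qPochInf (q : ℂ) (a * d) *
            qPochInf (q : ℂ) (b * c) * qPochInf (q : ℂ) (b * d)) := by 
  have hq : ‖(q : ℂ)‖ < 1 := by
    rw [Complex.norm_real, Real.norm_eq_abs, abs_of_pos hq0]; exact hq1
  have hq0' : (q : ℂ) ≠ 0 := by exact_mod_cast hq0.ne'
  have good : ∀ x : ℂ, ‖x‖ < 1 → aaGood (q : ℂ) x := by
    intro x hx n h
    have h' := congrArg norm h
    rw [norm_mul, norm_pow, norm_one] at h'
    have h3 : ‖(q : ℂ)‖ ^ n ≤ 1 := pow_le_one₀ (norm_nonneg _) hq.le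
    have h4 := mul_le_of_le_one_right (norm_nonneg x) h3
    linarith
  have h := aa_full (q : ℂ) hq a b c d hc hd (good _ hac) (good _ had) (good _ hbc) (good _ hbd)
  rw [aa_zero (q : ℂ) hq hq0' c d hc hd] at h
  have n1 := aa_P_ne (q : ℂ) hq _ (good _ hac)
  have n2 := aa_P_ne (q : ℂ) hq _ (good _ had)
  have n3 := aa_P_ne (q : ℂ) hq _ (good _ hbc)
  have n4 := aa_P_ne (q : ℂ) hq _ (good _ hbd)
  have hI : qIntegral (q : ℂ)
        (fun t => qPochInf (q : ℂ) ((q : ℂ) * t / c) * qPochInf (q : ℂ) ((q : ℂ) * t / d) /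
          (qPochInf (q : ℂ) (a * t) * qPochInf (q : ℂ) (b * t))) c d
      = (1 - (q : ℂ)) * aaS (q : ℂ) a b c d := rfl
  rw [hI, eq_div_iff (by simp [n1, n2, n3, n4])]
  linear_combination -(1 - (q : ℂ)) * h
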